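/- arXiv:1101.1724 — 3 statements merged into one kernel-verified Lean document; each statement's English description precedes it below -/
import Mathlib

section
/- (Recovery of S from X_1 and S̄.) For every j ≥ 1, X_{j+1} = Σ_{l≥0} (−1)^{l+1}·X_1·X̄_j·1{τ_l + 1 ≤ j ≤ τ_{l+1}}. Consequently, the walk (S_j)_{j ≤ n+1} is determined by X_1 = S_1 together with (S̄_j)_{j ≤ n}, for every n ≥ 0. -/
noncomputable section

/-- The walk `S` associated with the sign sequence `X : {1,2,…} → {−1,1}`:
`S 0 = 0`, `S n = X 1 + ⋯ + X n`. -/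
def cvWalk (X : ℕ → ℤ) (n : ℕ) : ℤ := ∑ j ∈ Finset.Icc 1 n, X j

/-- The crossing times of `S`: `τ 0 = 0` and
`τ (l+1) = min {i > τ l : S (i-1) * S (i+1) < 0}`. -/
def cvTau (X : ℕ → ℤ) : ℕ → ℕ
  | 0 => 0
  | l + 1 => sInf {i : ℕ | cvTau X l < i ∧ cvWalk X (i - 1) * cvWalk X (i + 1) < 0}

/-- The increments of the Csaki–Vincze transform `S̄ = T(S)`:
`X̄ j = Σ_{l ≥ 0} (−1)^(l+1) · X 1 · X (j+1) · 1_{τ l + 1 ≤ j ≤ τ (l+1)}`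
(the sum may be truncated to `l ≤ j` since `l ≤ τ l` whenever `τ l + 1 ≤ j`). -/
def cvXbar (X : ℕ → ℤ) (j : ℕ) : ℤ :=
  ∑ l ∈ Finset.range (j + 1),
    (-1 : ℤ) ^ (l + 1) * X 1 * X (j + 1) *
      (if cvTau X l + 1 ≤ j ∧ j ≤ cvTau X (l + 1) then 1 else 0)

/-- The Csaki–Vincze transform `S̄ = T(S)`. -/
def cvSbar (X : ℕ → ℤ) (n : ℕ) : ℤ := ∑ j ∈ Finset.Icc 1 n, cvXbar X j

/-- `Ȳ`-type process of a walk `f`: `max_{0 ≤ k ≤ n} f k − f n`. -/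
def cvYof (f : ℕ → ℤ) (n : ℕ) : ℤ :=
  (Finset.range (n + 1)).sup' Finset.nonempty_range_add_one f - f n

/-- `Ȳ n = max_{0 ≤ k ≤ n} S̄ k − S̄ n`. -/
def cvYbar (X : ℕ → ℤ) (n : ℕ) : ℤ := cvYof (cvSbar X) n

open Classical in
/-- number of crossings strictly before `j` -/
def cvCount (X : ℕ → ℤ) (j : ℕ) : ℕ :=
  Nat.count (fun i => 1 ≤ i ∧ cvWalk X (i - 1) * cvWalk X (i + 1) < 0) j

lemma cvTau_succ_eq_nth (X : ℕ → ℤ)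
    (hinf : {i : ℕ | 1 ≤ i ∧ cvWalk X (i - 1) * cvWalk X (i + 1) < 0}.Infinite) (l : ℕ) :
    cvTau X (l + 1) = Nat.nth (fun i => 1 ≤ i ∧ cvWalk X (i - 1) * cvWalk X (i + 1) < 0) l := by
  induction l with
  | zero =>
    rw [Nat.nth_eq_sInf]
    simp only [cvTau]
    congr 1
    ext i
    simp [Nat.one_le_iff_ne_zero, Nat.pos_iff_ne_zero]
  | succ l ih =>
    rw [Nat.nth_eq_sInf, cvTau, ih]
    congr 1
    ext i
    simp only [Set.mem_ofPred_eq]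
    constructor
    · rintro ⟨h1, h2⟩
      refine ⟨⟨by omega, h2⟩, fun k hk => ?_⟩
      exact lt_of_le_of_lt ((Nat.nth_le_nth hinf).2 (by omega)) h1
    · rintro ⟨h1, h2⟩
      exact ⟨h2 l (by omega), h1.2⟩

lemma cv_iff (X : ℕ → ℤ)
    (hinf : {i : ℕ | 1 ≤ i ∧ cvWalk X (i - 1) * cvWalk X (i + 1) < 0}.Infinite)
    (j : ℕ) (hj : 1 ≤ j) (l : ℕ) :
    (cvTau X l + 1 ≤ j ∧ j ≤ cvTau X (l + 1)) ↔ l = cvCount X j := by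
  classical
  have h1 : j ≤ cvTau X (l + 1) ↔ cvCount X j ≤ l := by
    rw [cvTau_succ_eq_nth X hinf]
    exact (Nat.count_le_iff_le_nth hinf).symm
  have h2 : cvTau X l + 1 ≤ j ↔ l ≤ cvCount X j := by
    cases l with
    | zero => simp [cvTau]; omega
    | succ l =>
      rw [cvTau_succ_eq_nth X hinf, Nat.succ_le_iff, Nat.succ_le_iff]
      exact (Nat.lt_nth_iff_count_lt hinf).symm
  rw [h1, h2]
  omega

lemma cv_sum (X : ℕ → ℤ)
    (hinf : {i : ℕ | 1 ≤ i ∧ cvWalk X (i - 1) * cvWalk X (i + 1) < 0}.Infinite)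
    (j : ℕ) (hj : 1 ≤ j) (c : ℤ) :
    ∑ l ∈ Finset.range (j + 1), (-1 : ℤ) ^ (l + 1) * X 1 * c *
      (if cvTau X l + 1 ≤ j ∧ j ≤ cvTau X (l + 1) then 1 else 0)
      = (-1 : ℤ) ^ (cvCount X j + 1) * X 1 * c := by
  classical
  have hc : cvCount X j < j + 1 := Nat.lt_succ_of_le (Nat.count_le _)
  simp only [cv_iff X hinf j hj]
  simp [hc]

lemma cv_sq (X : ℕ → ℤ) (hX : ∀ j, 1 ≤ j → X j = 1 ∨ X j = -1) (k : ℕ) (c : ℤ) :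
    (-1 : ℤ) ^ (k + 1) * X 1 * ((-1 : ℤ) ^ (k + 1) * X 1 * c) = c := by
  have h1 : X 1 * X 1 = 1 := by rcases hX 1 le_rfl with h | h <;> simp [h]
  have h2 : (-1 : ℤ) ^ (k + 1) * (-1 : ℤ) ^ (k + 1) = 1 := by
    rw [← mul_pow]; simp
  calc _ = ((-1 : ℤ) ^ (k + 1) * (-1 : ℤ) ^ (k + 1)) * (X 1 * X 1) * c := by ring
    _ = c := by rw [h1, h2]; ring

lemma cv_rec (X : ℕ → ℤ) (hX : ∀ j, 1 ≤ j → X j = 1 ∨ X j = -1)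
    (hinf : {i : ℕ | 1 ≤ i ∧ cvWalk X (i - 1) * cvWalk X (i + 1) < 0}.Infinite)
    (j : ℕ) (hj : 1 ≤ j) :
    X (j + 1) = (-1 : ℤ) ^ (cvCount X j + 1) * X 1 * cvXbar X j := by
  rw [cvXbar, cv_sum X hinf j hj, cv_sq X hX]

lemma cvCount_congr (X X' : ℕ → ℤ) (j : ℕ) (h : ∀ i ≤ j, cvWalk X' i = cvWalk X i) :
    cvCount X' j = cvCount X j := by
  classical
  unfold cvCount
  rw [Nat.count_eq_card_filter_range, Nat.count_eq_card_filter_range]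
  congr 1
  apply Finset.filter_congr
  intro i hi
  rw [Finset.mem_range] at hi
  rw [h (i - 1) (by omega), h (i + 1) (by omega)]

lemma cvWalk_succ (X : ℕ → ℤ) (n : ℕ) : cvWalk X (n + 1) = cvWalk X n + X (n + 1) := by
  unfold cvWalk
  rw [Finset.sum_Icc_succ_top (by omega)]

lemma cvSbar_succ (X : ℕ → ℤ) (n : ℕ) : cvSbar X (n + 1) = cvSbar X n + cvXbar X (n + 1) := by
  unfold cvSbar
  rw [Finset.sum_Icc_succ_top (by omega)]

/-- **Recovery of `S` from `X 1` and `S̄`.** For every `j ≥ 1`,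
`X (j+1) = Σ_{l ≥ 0} (−1)^(l+1) · X 1 · X̄ j · 1_{τ l + 1 ≤ j ≤ τ (l+1)}`.
Consequently, the walk `(S j)_{j ≤ n+1}` is determined by `X 1 = S 1` together with
`(S̄ j)_{j ≤ n}`, for every `n ≥ 0`. -/
theorem cv_recovery (X : ℕ → ℤ) (hX : ∀ j, 1 ≤ j → X j = 1 ∨ X j = -1)
    (hinf : {i : ℕ | 1 ≤ i ∧ cvWalk X (i - 1) * cvWalk X (i + 1) < 0}.Infinite) :
    (∀ j, 1 ≤ j →
      X (j + 1) = ∑ l ∈ Finset.range (j + 1),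
        (-1 : ℤ) ^ (l + 1) * X 1 * cvXbar X j *
          (if cvTau X l + 1 ≤ j ∧ j ≤ cvTau X (l + 1) then 1 else 0)) ∧
    (∀ X' : ℕ → ℤ, (∀ j, 1 ≤ j → X' j = 1 ∨ X' j = -1) →
      {i : ℕ | 1 ≤ i ∧ cvWalk X' (i - 1) * cvWalk X' (i + 1) < 0}.Infinite →
      X' 1 = X 1 →
      ∀ n : ℕ, (∀ j ≤ n, cvSbar X' j = cvSbar X j) →
        ∀ j ≤ n + 1, cvWalk X' j = cvWalk X j) := by
  refine ⟨fun j hj => ?_, ?_⟩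
  · rw [cv_sum X hinf j hj]
    exact cv_rec X hX hinf j hj
  · intro X' hX' hinf' h1 n
    induction n with
    | zero =>
      intro _ j hj
      have : j = 0 ∨ j = 1 := by omega
      rcases this with rfl | rfl <;> simp [cvWalk, h1]
    | succ n ih =>
      intro hS j hj
      have ih' := ih (fun j hj => hS j (by omega))
      rcases Nat.lt_or_ge j (n + 2) with hlt | hge
      · exact ih' j (by omega)
      · obtain rfl : j = n + 1 + 1 := by omega
        have hb : cvXbar X' (n + 1) = cvXbar X (n + 1) := by
          have a := hS (n + 1) le_rfl
          have b := hS n (by omega)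
          rw [cvSbar_succ, cvSbar_succ] at a
          linarith
        rw [cvWalk_succ X', cvWalk_succ X, ih' (n + 1) le_rfl,
          cv_rec X' hX' hinf' (n + 1) (by omega), cv_rec X hX hinf (n + 1) (by omega),
          cvCount_congr X X' (n + 1) ih', h1, hb]
end
end

section
/- (The preimage T^{-1}{S̄} has exactly two elements.) Let X' : {1,2,3,…} → {−1,1} be another sign sequence with walk S' such that {i ≥ 1 : S'_{i−1}·S'_{i+1} < 0} is infinite, and suppose T(S') = T(S). Then S' = S or S' = −S. -/
noncomputable section

lemma cvTau_spec (X : ℕ → ℤ)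
    (hinf : {i : ℕ | 1 ≤ i ∧ cvWalk X (i - 1) * cvWalk X (i + 1) < 0}.Infinite) (l : ℕ) :
    cvTau X l < cvTau X (l + 1) ∧
      cvWalk X (cvTau X (l + 1) - 1) * cvWalk X (cvTau X (l + 1) + 1) < 0 := by
  have hne : {i : ℕ | cvTau X l < i ∧ cvWalk X (i - 1) * cvWalk X (i + 1) < 0}.Nonempty := by
    obtain ⟨i, hi, hlt⟩ := hinf.exists_gt (cvTau X l)
    exact ⟨i, hlt, hi.2⟩
  have h := Nat.sInf_mem hne
  rw [cvTau]
  exact h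

lemma cvTau_min (X : ℕ → ℤ) (l i : ℕ) (h1 : cvTau X l < i)
    (h2 : cvWalk X (i - 1) * cvWalk X (i + 1) < 0) : cvTau X (l + 1) ≤ i := by
  rw [cvTau]
  exact Nat.sInf_le ⟨h1, h2⟩

lemma cvTau_strictMono (X : ℕ → ℤ)
    (hinf : {i : ℕ | 1 ≤ i ∧ cvWalk X (i - 1) * cvWalk X (i + 1) < 0}.Infinite) :
    StrictMono (cvTau X) :=
  strictMono_nat_of_lt_succ fun l => (cvTau_spec X hinf l).1

lemma cvXbar_eq (X : ℕ → ℤ)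
    (hinf : {i : ℕ | 1 ≤ i ∧ cvWalk X (i - 1) * cvWalk X (i + 1) < 0}.Infinite) (j l : ℕ)
    (h1 : cvTau X l < j) (h2 : j ≤ cvTau X (l + 1)) :
    cvXbar X j = (-1 : ℤ) ^ (l + 1) * X 1 * X (j + 1) := by
  have hm := cvTau_strictMono X hinf
  unfold cvXbar
  rw [Finset.sum_eq_single l]
  · rw [if_pos ⟨h1, h2⟩, mul_one]
  · intro b _ hb
    rw [if_neg, mul_zero]
    rintro ⟨h3, h4⟩
    rcases lt_or_gt_of_ne hb with h | h
    · have := hm.monotone (show b + 1 ≤ l from h)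
      omega
    · have := hm.monotone (show l + 1 ≤ b from h)
      omega
  · intro h
    have := hm.le_apply (x := l)
    simp at h
    omega

lemma cvTau_exists (X : ℕ → ℤ)
    (hinf : {i : ℕ | 1 ≤ i ∧ cvWalk X (i - 1) * cvWalk X (i + 1) < 0}.Infinite) (j : ℕ)
    (hj : 1 ≤ j) : ∃ l, cvTau X l < j ∧ j ≤ cvTau X (l + 1) := by
  have hex : ∃ m, j ≤ cvTau X m := ⟨j, (cvTau_strictMono X hinf).le_apply⟩
  have hs := Nat.find_spec hex
  have hmin := fun m => Nat.find_min hex (m := m)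
  generalize Nat.find hex = m at hs hmin
  cases m with
  | zero => simp [cvTau] at hs; omega
  | succ l => exact ⟨l, not_le.1 (hmin l (Nat.lt_succ_self l)), hs⟩

lemma cvTau_causal (X X' : ℕ → ℤ)
    (hinf : {i : ℕ | 1 ≤ i ∧ cvWalk X (i - 1) * cvWalk X (i + 1) < 0}.Infinite)
    (hinf' : {i : ℕ | 1 ≤ i ∧ cvWalk X' (i - 1) * cvWalk X' (i + 1) < 0}.Infinite) (j : ℕ)
    (h : ∀ i, i < j → (cvWalk X (i - 1) * cvWalk X (i + 1) < 0 ↔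
      cvWalk X' (i - 1) * cvWalk X' (i + 1) < 0)) (l : ℕ) :
    cvTau X l = cvTau X' l ∨ (j ≤ cvTau X l ∧ j ≤ cvTau X' l) := by
  induction l with
  | zero => left; simp [cvTau]
  | succ l ih =>
    obtain ⟨a1, a2⟩ := cvTau_spec X hinf l
    obtain ⟨b1, b2⟩ := cvTau_spec X' hinf' l
    rcases ih with ih | ih
    · have p : cvTau X (l + 1) < j → cvTau X' (l + 1) ≤ cvTau X (l + 1) := fun q =>
        cvTau_min X' l _ (by omega) ((h _ q).1 a2)
      have p' : cvTau X' (l + 1) < j → cvTau X (l + 1) ≤ cvTau X' (l + 1) := fun q =>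
        cvTau_min X l _ (by omega) ((h _ q).2 b2)
      omega
    · omega

lemma cvWalk_smul (X X' : ℕ → ℤ) (c : ℤ) (n : ℕ)
    (h : ∀ i, 1 ≤ i → i ≤ n → X' i = c * X i) : cvWalk X' n = c * cvWalk X n := by
  unfold cvWalk
  rw [Finset.mul_sum]
  refine Finset.sum_congr rfl fun i hi => ?_
  rw [Finset.mem_Icc] at hi
  exact h i hi.1 hi.2

/-- **The preimage `T⁻¹{S̄}` has exactly two elements.** If `X'` is another sign sequence
whose walk `S'` has infinitely many crossings and `T(S') = T(S)`, then `S' = S` or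
`S' = −S`. -/
theorem cv_preimage_two_elements (X : ℕ → ℤ) (hX : ∀ j, 1 ≤ j → X j = 1 ∨ X j = -1)
    (hinf : {i : ℕ | 1 ≤ i ∧ cvWalk X (i - 1) * cvWalk X (i + 1) < 0}.Infinite)
    (X' : ℕ → ℤ) (hX' : ∀ j, 1 ≤ j → X' j = 1 ∨ X' j = -1)
    (hinf' : {i : ℕ | 1 ≤ i ∧ cvWalk X' (i - 1) * cvWalk X' (i + 1) < 0}.Infinite)
    (hT : ∀ n, cvSbar X' n = cvSbar X n) :
    (∀ n, cvWalk X' n = cvWalk X n) ∨ (∀ n, cvWalk X' n = -cvWalk X n) := by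
  have hbar : ∀ j, 1 ≤ j → cvXbar X' j = cvXbar X j := by
    intro j hj
    obtain ⟨k, rfl⟩ : ∃ k, j = k + 1 := ⟨j - 1, by omega⟩
    have h1 := hT (k + 1)
    have h0 := hT k
    unfold cvSbar at h0 h1
    rw [Finset.sum_Icc_succ_top (by omega), Finset.sum_Icc_succ_top (by omega)] at h1
    linarith
  obtain ⟨c, hc, hc1⟩ : ∃ c : ℤ, (c = 1 ∨ c = -1) ∧ X' 1 = c * X 1 := by
    refine ⟨X 1 * X' 1, ?_, ?_⟩ <;>
    rcases hX 1 le_rfl with a | a <;> rcases hX' 1 le_rfl with b | b <;> simp [a, b]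
  have key : ∀ n, ∀ i, 1 ≤ i → i ≤ n → X' i = c * X i := by
    intro n
    induction n with
    | zero => intro i h1 h2; omega
    | succ j ih =>
      intro i h1 h2
      rcases Nat.lt_or_ge i (j + 1) with h | h
      · exact ih i h1 (by omega)
      obtain rfl : i = j + 1 := by omega
      rcases Nat.eq_zero_or_pos j with rfl | hj
      · exact hc1
      have hw : ∀ m, m ≤ j → cvWalk X' m = c * cvWalk X m := fun m hm =>
        cvWalk_smul X X' c m fun i a b => ih i a (by omega)
      have hP : ∀ i, i < j → (cvWalk X (i - 1) * cvWalk X (i + 1) < 0 ↔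
          cvWalk X' (i - 1) * cvWalk X' (i + 1) < 0) := by
        intro i hi
        rw [hw (i - 1) (by omega), hw (i + 1) (by omega)]
        rcases hc with rfl | rfl <;> simp
      obtain ⟨l, l1, l2⟩ := cvTau_exists X hinf j hj
      have q1 := cvTau_causal X X' hinf hinf' j hP l
      have q2 := cvTau_causal X X' hinf hinf' j hP (l + 1)
      have e := hbar j hj
      rw [cvXbar_eq X hinf j l l1 l2,
        cvXbar_eq X' hinf' j l (by omega) (by omega), hc1] at e
      have hs : ((-1 : ℤ) ^ (l + 1)) ≠ 0 := by simp
      have e2 : c * X 1 * X' (j + 1) = X 1 * X (j + 1) := by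
        apply mul_left_cancel₀ hs
        linarith
      rcases hc with rfl | rfl <;> rcases hX 1 le_rfl with a | a <;> rw [a] at e2 <;> linarith
  have hw : ∀ n, cvWalk X' n = c * cvWalk X n := fun n => cvWalk_smul X X' c n (key n)
  rcases hc with rfl | rfl
  · left; intro n; simpa using hw n
  · right; intro n; simpa using hw n
end
end

section
/- Let T_{p,x} = inf{q ≥ p : S_q − S_p = −|x|} (with T_{p,x} = +∞ if no such q exists). For all integers p ≤ n and all x ∈ G_ℕ: if n ≤ T_{p,x} then K_{p,n}(x) = δ_{x + e(x)·S_{p,n}}, and if n > T_{p,x} then K_{p,n}(x) = Σ_{i=1}^N α_i·δ_{S⁺_{p,n}·e_i}. -/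
noncomputable section

/-- The star graph `G` with `N` half-lines `D_1, …, D_N` glued at the origin, realized by
canonical representatives in `Fin N × ℝ`: a point is a pair (ray index, distance to the
origin), the origin being represented on the ray of index `N - 1` (i.e. the ray `e_N`,
matching the convention `e(0) = e_N`). -/
def StarG (N : ℕ) : Type :=
  {p : Fin N × ℝ // 0 ≤ p.2 ∧ (p.2 = 0 → (p.1 : ℕ) = N - 1)}

namespace StarG

variable {N : ℕ}

instance : DecidableEq (StarG N) :=
  inferInstanceAs (DecidableEq {p : Fin N × ℝ // 0 ≤ p.2 ∧ (p.2 = 0 → (p.1 : ℕ) = N - 1)})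

instance : MeasurableSpace (StarG N) :=
  inferInstanceAs (MeasurableSpace {p : Fin N × ℝ // 0 ≤ p.2 ∧ (p.2 = 0 → (p.1 : ℕ) = N - 1)})

/-- The ray index `e(x)` of a point, with the convention `e(0) = e_N`. -/
def ray (x : StarG N) : Fin N := x.1.1

/-- `|x| = d(x, 0)`, the distance from `x` to the origin. -/
def nrm (x : StarG N) : ℝ := x.1.2

/-- The distance on `G`: `d(h·e_i, h'·e_j) = |h − h'|` if `i = j` and `h + h'` if
`i ≠ j`. -/
def dist (x y : StarG N) : ℝ :=
  if x.ray = y.ray then |x.nrm - y.nrm| else x.nrm + y.nrm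

/-- The origin `0` of `G` (requires `N ≥ 1`). -/
def origin (hN : 1 ≤ N) : StarG N :=
  ⟨(⟨N - 1, by omega⟩, 0), le_refl 0, fun _ => rfl⟩

/-- The point `h·e_i` (sent to the origin when `h ≤ 0`; in particular `0·e_i = 0` for
every `i`).  For `x` on the ray `D_i` and `t ≥ −|x|`, the point `x + e(x)·t` is
`pt hN (ray x) (nrm x + t)`. -/
def pt (hN : 1 ≤ N) (i : Fin N) (h : ℝ) : StarG N :=
  if hh : 0 < h then ⟨(i, h), le_of_lt hh, fun h0 => absurd h0 (ne_of_gt hh)⟩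
  else origin hN

/-- `x ∈ D_i` : the point `x` lies on the `i`-th half-line (the origin lies on all). -/
def memRay (x : StarG N) (i : Fin N) : Prop := x.ray = i ∨ x.nrm = 0

/-- `x ∈ G_ℕ` : the distance from `x` to the origin is a natural number. -/
def isLattice (x : StarG N) : Prop := ∃ m : ℕ, x.nrm = (m : ℝ)

end StarG

/-- `min_{p ≤ h ≤ n} S h` (junk value `0` when `n < p`). -/
def walkMin (S : ℤ → ℤ) (p n : ℤ) : ℤ :=
  if h : p ≤ n then (Finset.Icc p n).inf' (Finset.nonempty_Icc.mpr h) S else 0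

/-- `S⁺_{p,n} = S_{p,n} − min_{p ≤ h ≤ n} S_{p,h} = S n − min_{p ≤ h ≤ n} S h`. -/
def walkPlus (S : ℤ → ℤ) (p n : ℤ) : ℤ := S n - walkMin S p n

/-- The one-step map `Ψ_{p,p+1}` on `G_ℕ`:
`Ψ_{p,p+1}(x) = x + e(x)·S_{p,p+1}` for `x ≠ 0` and `Ψ_{p,p+1}(0) = S⁺_{p,p+1}·η_p`. -/
def psiStep {N : ℕ} (hN : 1 ≤ N) (S : ℤ → ℤ) (η : ℤ → Fin N) (p : ℤ) (x : StarG N) :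
    StarG N :=
  if x.nrm = 0 then StarG.pt hN (η p) ((walkPlus S p (p + 1) : ℤ) : ℝ)
  else StarG.pt hN x.ray (x.nrm + ((S (p + 1) - S p : ℤ) : ℝ))

/-- `k`-fold composition: `psiAux hN S η p k = Ψ_{p+k-1,p+k} ∘ ⋯ ∘ Ψ_{p,p+1}`. -/
def psiAux {N : ℕ} (hN : 1 ≤ N) (S : ℤ → ℤ) (η : ℤ → Fin N) (p : ℤ) :
    ℕ → StarG N → StarG N
  | 0 => id
  | k + 1 => fun x => psiStep hN S η (p + k) (psiAux hN S η p k x)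

/-- The discrete flow of mappings `Ψ_{p,n} = Ψ_{n−1,n} ∘ ⋯ ∘ Ψ_{p,p+1}` (the identity
when `n ≤ p`). -/
def psiFlow {N : ℕ} (hN : 1 ≤ N) (S : ℤ → ℤ) (η : ℤ → Fin N) (p n : ℤ) (x : StarG N) :
    StarG N :=
  psiAux hN S η p (n - p).toNat x

/-- The Dirac mass `δ_z` on `G_ℕ`, as a point-mass function. -/
def starDirac {N : ℕ} (z : StarG N) : StarG N → ℝ := fun y => if y = z then 1 else 0

/-- The one-step kernel `K_{p,p+1}`:
`K_{p,p+1}(x) = δ_{x + e(x)·S_{p,p+1}}` for `x ≠ 0` and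
`K_{p,p+1}(0) = Σ_{i=1}^N α_i · δ_{S⁺_{p,p+1}·e_i}`. -/
def kerStep {N : ℕ} (hN : 1 ≤ N) (α : Fin N → ℝ) (S : ℤ → ℤ) (p : ℤ) (x : StarG N) :
    StarG N → ℝ :=
  if x.nrm = 0 then
    fun y => ∑ i : Fin N, α i * starDirac (StarG.pt hN i ((walkPlus S p (p + 1) : ℤ) : ℝ)) y
  else starDirac (StarG.pt hN x.ray (x.nrm + ((S (p + 1) - S p : ℤ) : ℝ)))

/-- Kernel composition: `(K K')(x, {y}) = Σ_z K'(z, {y}) · K(x, {z})`. -/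
def kerComp {N : ℕ} (K K' : StarG N → StarG N → ℝ) : StarG N → StarG N → ℝ :=
  fun x y => ∑' z : StarG N, K x z * K' z y

/-- `k`-fold kernel composition `K_{p,p+1} K_{p+1,p+2} ⋯ K_{p+k−1,p+k}`. -/
def kerAux {N : ℕ} (hN : 1 ≤ N) (α : Fin N → ℝ) (S : ℤ → ℤ) (p : ℤ) :
    ℕ → StarG N → StarG N → ℝ
  | 0 => fun x => starDirac x
  | k + 1 => kerComp (kerAux hN α S p k) (kerStep hN α S (p + k))

/-- The discrete flow of kernels `K_{p,n} = K_{p,p+1} K_{p+1,p+2} ⋯ K_{n−1,n}`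
(`K_{p,p}(x) = δ_x`). -/
def kerFlow {N : ℕ} (hN : 1 ≤ N) (α : Fin N → ℝ) (S : ℤ → ℤ) (p n : ℤ) :
    StarG N → StarG N → ℝ :=
  kerAux hN α S p (n - p).toNat

theorem wm_self (S : ℤ → ℤ) (p : ℤ) : walkMin S p p = S p := by
  simp [walkMin]

theorem wm_succ (S : ℤ → ℤ) (p n : ℤ) (h : p ≤ n) :
    walkMin S p (n + 1) = min (walkMin S p n) (S (n + 1)) := by
  have h1 : p ≤ n + 1 := by omega
  simp only [walkMin, h, h1, dif_pos]
  apply le_antisymm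
  · refine le_min ?_ ?_
    · refine Finset.le_inf' _ _ fun j hj => Finset.inf'_le _ ?_
      simp only [Finset.mem_Icc] at *
      omega
    · refine Finset.inf'_le _ ?_
      simp only [Finset.mem_Icc] at *
      omega
  · refine Finset.le_inf' _ _ fun j hj => ?_
    simp only [Finset.mem_Icc] at hj
    by_cases hjn : j = n + 1
    · subst hjn
      exact min_le_right _ _
    · refine (min_le_left _ _).trans (Finset.inf'_le _ ?_)
      simp only [Finset.mem_Icc] at *
      omega

theorem wm_le (S : ℤ → ℤ) (p n j : ℤ) (h : p ≤ j) (h2 : j ≤ n) : walkMin S p n ≤ S j := by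
  have h1 : p ≤ n := by omega
  simp only [walkMin, h1, dif_pos]
  exact Finset.inf'_le _ (Finset.mem_Icc.mpr ⟨h, h2⟩)

theorem le_wm (S : ℤ → ℤ) (p n c : ℤ) (h1 : p ≤ n) (h : ∀ j, p ≤ j → j ≤ n → c ≤ S j) :
    c ≤ walkMin S p n := by
  simp only [walkMin, h1, dif_pos]
  refine Finset.le_inf' _ _ fun j hj => ?_
  rw [Finset.mem_Icc] at hj
  exact h j hj.1 hj.2

theorem comp_dirac {N : ℕ} (K K' : StarG N → StarG N → ℝ) (x z : StarG N)
    (h : K x = starDirac z) : kerComp K K' x = K' z := by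
  funext y
  simp only [kerComp, h, starDirac]
  rw [tsum_eq_single z]
  · simp
  · intro b hb
    simp [hb]

theorem comp_sum {N : ℕ} (K K' : StarG N → StarG N → ℝ) (x : StarG N) (α : Fin N → ℝ)
    (z : Fin N → StarG N)
    (h : K x = fun y => ∑ i, α i * starDirac (z i) y) :
    kerComp K K' x = fun y => ∑ i, α i * K' (z i) y := by
  funext y
  simp only [kerComp, h]
  have hz : ∀ i, HasSum (fun w => α i * starDirac (z i) w * K' w y) (α i * K' (z i) y) := by
    intro i
    have := hasSum_single (f := fun w => α i * starDirac (z i) w * K' w y) (z i) (by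
      intro b hb
      simp [starDirac, hb])
    simpa [starDirac] using this
  have := hasSum_sum (s := Finset.univ) fun i _ => hz i
  simp only [← Finset.sum_mul] at this
  exact this.tsum_eq

theorem pt_nonpos {N : ℕ} (hN : 1 ≤ N) (i : Fin N) (h : ℝ) (hh : h ≤ 0) :
    StarG.pt hN i h = StarG.origin hN := by
  simp [StarG.pt, not_lt.mpr hh]

theorem nrm_origin {N : ℕ} (hN : 1 ≤ N) : (StarG.origin hN).nrm = 0 := rfl

theorem nrm_pt {N : ℕ} (hN : 1 ≤ N) (i : Fin N) (h : ℝ) (hh : 0 < h) :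
    (StarG.pt hN i h).nrm = h := by
  simp [StarG.pt, hh, StarG.nrm]

theorem ray_pt {N : ℕ} (hN : 1 ≤ N) (i : Fin N) (h : ℝ) (hh : 0 < h) :
    (StarG.pt hN i h).ray = i := by
  simp [StarG.pt, hh, StarG.ray]

theorem pt_self {N : ℕ} (hN : 1 ≤ N) (x : StarG N) : StarG.pt hN x.ray x.nrm = x := by
  obtain ⟨⟨i, r⟩, h0, h1⟩ := x
  by_cases hr : 0 < r
  · simp [StarG.pt, StarG.ray, StarG.nrm, hr]
    rfl
  · have hr0 : r = 0 := le_antisymm (not_lt.mp hr) h0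
    subst hr0
    have := h1 rfl
    refine (pt_nonpos hN _ _ (le_refl (0 : ℝ))).trans ?_
    apply Subtype.ext
    refine Prod.ext (Fin.ext ?_) rfl
    exact this.symm

theorem kerStep_origin {N : ℕ} (hN : 1 ≤ N) (α : Fin N → ℝ) (S : ℤ → ℤ) (p : ℤ) :
    kerStep hN α S p (StarG.origin hN) =
    fun y => ∑ i : Fin N, α i * starDirac (StarG.pt hN i ((walkPlus S p (p + 1) : ℤ) : ℝ)) y := by
  simp [kerStep, nrm_origin]

theorem kerStep_pt {N : ℕ} (hN : 1 ≤ N) (α : Fin N → ℝ) (S : ℤ → ℤ) (p : ℤ) (i : Fin N) (h : ℝ)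
    (hh : 0 < h) :
    kerStep hN α S p (StarG.pt hN i h) =
    starDirac (StarG.pt hN i (h + ((S (p + 1) - S p : ℤ) : ℝ))) := by
  rw [kerStep, nrm_pt _ _ _ hh, ray_pt _ _ _ hh, if_neg hh.ne']

theorem walk_ivt (S : ℤ → ℤ)
    (hS : ∀ n : ℤ, S n - S (n - 1) = 1 ∨ S n - S (n - 1) = -1) (p : ℤ) (m k : ℕ)
    (h : ∀ j : ℤ, p ≤ j → j < p + k → S j - S p ≠ -m) :
    ∀ j : ℤ, p ≤ j → j < p + k → -(m : ℤ) < S j - S p := by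
  intro j hj
  induction j, hj using Int.le_induction with
  | base => intro hk; have := h p le_rfl hk; omega
  | succ j hj ih =>
    intro hk
    have h1 := ih (by omega)
    have h2 := h (j + 1) (by omega) hk
    have h3 := hS (j + 1)
    rw [add_sub_cancel_right] at h3
    omega

theorem kerAux_main {N : ℕ} (hN : 1 ≤ N) (α : Fin N → ℝ)
    (hsum : ∑ i, α i = 1) (S : ℤ → ℤ)
    (hS : ∀ n : ℤ, S n - S (n - 1) = 1 ∨ S n - S (n - 1) = -1)
    (p : ℤ) (x : StarG N) (m : ℕ) (hx : x.nrm = m) (k : ℕ) :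
    ((∀ j : ℤ, p ≤ j → j < p + k → -(m : ℤ) < S j - S p) →
      kerAux hN α S p k x = starDirac (StarG.pt hN x.ray ((m + (S (p + k) - S p) : ℤ) : ℝ))) ∧
    ((∃ j : ℤ, p ≤ j ∧ j < p + k ∧ S j - S p = -m) →
      kerAux hN α S p k x =
        fun y => ∑ i : Fin N, α i * starDirac (StarG.pt hN i ((walkPlus S p (p + k) : ℤ) : ℝ)) y) := by
  induction k with
  | zero =>
    constructor
    · intro _
      have := pt_self hN x
      rw [hx] at this
      simp [kerAux, this]
    · rintro ⟨j, h1, h2, _⟩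
      simp at h2
      omega
  | succ k ih =>
    obtain ⟨ihA, ihB⟩ := ih
    have hpk : p + ((k + 1 : ℕ) : ℤ) = p + k + 1 := by push_cast; ring
    rw [hpk]
    have hp : p ≤ p + k := by omega
    have hsucc := wm_succ S p (p + k) hp
    have hsucc' := wm_succ S (p + k) (p + k) le_rfl
    rw [wm_self] at hsucc'
    have hwle := wm_le S p (p + k) (p + k) hp le_rfl
    have hst := hS (p + k + 1)
    rw [add_sub_cancel_right] at hst
    constructor
    · intro hA
      have h1 := ihA fun j a b => hA j a (by omega)
      have hpos := hA (p + k) hp (by omega)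
      rw [kerAux, comp_dirac _ _ _ _ h1, kerStep_pt]
      · congr 2
        push_cast
        ring
      · have : (0 : ℤ) < m + (S (p + k) - S p) := by omega
        exact_mod_cast this
    · intro hB
      by_cases hC : ∃ j : ℤ, p ≤ j ∧ j < p + k ∧ S j - S p = -m
      · rw [kerAux, comp_sum _ _ _ _ _ (ihB hC)]
        by_cases h0 : walkPlus S p (p + k) = 0
        · have he : walkPlus S p (p + k + 1) = walkPlus S (p + k) (p + k + 1) := by
            unfold walkPlus at *
            rw [hsucc, hsucc']
            omega
          funext y
          simp only [h0, he, Int.cast_zero, pt_nonpos hN _ _ (le_refl (0 : ℝ)), kerStep_origin]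
          rw [← Finset.sum_mul, hsum, one_mul]
        · have hw : 0 < walkPlus S p (p + k) := by unfold walkPlus at *; omega
          have he : walkPlus S p (p + k + 1) = walkPlus S p (p + k) + (S (p + k + 1) - S (p + k)) := by
            unfold walkPlus at *
            rw [hsucc]
            omega
          funext y
          refine Finset.sum_congr rfl fun i _ => ?_
          rw [kerStep_pt _ _ _ _ _ _ (by exact_mod_cast hw), he]
          push_cast
          rfl
      · have hne : ∀ j : ℤ, p ≤ j → j < p + k → S j - S p ≠ -m :=
          fun j a b c => hC ⟨j, a, b, c⟩
        have hgt := walk_ivt S hS p m k hne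
        obtain ⟨j, a, b, c⟩ := hB
        have hj : j = p + k := by
          by_contra hcon
          exact hne j a (by omega) c
        subst hj
        have hmin : walkMin S p (p + k) = S (p + k) := by
          refine le_antisymm hwle (le_wm _ _ _ _ hp fun j a' b' => ?_)
          by_cases hj : j = p + k
          · rw [hj]
          · have := hgt j a' (by omega)
            omega
        have h0 : (m : ℤ) + (S (p + k) - S p) = 0 := by omega
        have h1 := ihA hgt
        rw [h0, pt_nonpos _ _ _ (by simp)] at h1
        rw [kerAux, comp_dirac _ _ _ _ h1, kerStep_origin]
        simp only [walkPlus, hsucc, hsucc', hmin]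

/-- Let `T_{p,x} = inf {q ≥ p : S q − S p = −|x|}`.  For all integers `p ≤ n` and all
`x ∈ G_ℕ`: if `n ≤ T_{p,x}` (i.e. `S_{p,j} > −|x|` for all `p ≤ j < n`) then
`K_{p,n}(x) = δ_{x + e(x)·S_{p,n}}`, and if `n > T_{p,x}` (i.e. `S_{p,j} = −|x|` for some
`p ≤ j < n`) then `K_{p,n}(x) = Σ_{i=1}^N α_i · δ_{S⁺_{p,n}·e_i}`. -/
theorem kerFlow_before_after_hitting (N : ℕ) (hN : 1 ≤ N) (α : Fin N → ℝ)
    (hα : ∀ i, 0 < α i) (hsum : ∑ i, α i = 1) (S : ℤ → ℤ)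
    (hS : ∀ n : ℤ, S n - S (n - 1) = 1 ∨ S n - S (n - 1) = -1)
    (p n : ℤ) (hpn : p ≤ n) (x : StarG N) (hx : x.isLattice) :
    ((∀ j : ℤ, p ≤ j → j < n → -x.nrm < ((S j - S p : ℤ) : ℝ)) →
      kerFlow hN α S p n x = starDirac (StarG.pt hN x.ray (x.nrm + ((S n - S p : ℤ) : ℝ)))) ∧
    ((∃ j : ℤ, p ≤ j ∧ j < n ∧ ((S j - S p : ℤ) : ℝ) = -x.nrm) →
      kerFlow hN α S p n x =
        fun y => ∑ i : Fin N, α i * starDirac (StarG.pt hN i ((walkPlus S p n : ℤ) : ℝ)) y) := by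
  obtain ⟨m, hm⟩ := hx
  obtain ⟨k, rfl⟩ : ∃ k : ℕ, n = p + k := ⟨(n - p).toNat, by omega⟩
  have key := kerAux_main hN α hsum S hS p x m hm k
  have hk : (p + (k : ℤ) - p).toNat = k := by omega
  rw [kerFlow, hk, hm]
  refine ⟨fun h => ?_, fun h => ?_⟩
  · rw [key.1 fun j a b => by exact_mod_cast h j a b]
    push_cast
    rfl
  · obtain ⟨j, a, b, c⟩ := h
    exact key.2 ⟨j, a, b, by exact_mod_cast c⟩
end
end
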